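/- Suppose the pair (𝒫,𝒟) satisfies conditions (T1)–(T3), and let (n_k)_{k≥1} be a strictly increasing sequence with Φ(n_k+1) = N_{n_k+1} (so 𝒟_{n_k+1} = {0,1,…,N_{n_k+1}−1} satisfies (T1)). Then for every k ≥ 1, every ξ with |ξ| < 1, every σ ∈ {−1,1}^ℕ, every admissible α, and every λ ∈ Λ_{n_k}^{σ,α}, one has |m_{𝒟_{n_k+1}}((ξ + λ)/P_{n_k+1})| ≥ 1 − (1/6)(3π/4)² > 0. -/

import Mathlib

open MeasureTheory Filter Finset Real
open scoped ENNReal NNReal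

noncomputable section

/-- `P n = p 1 * p 2 * ⋯ * p n`. -/
def Pprod (p : ℕ → ℕ) (n : ℕ) : ℕ := ∏ i ∈ Finset.Icc 1 n, p i

/-- The uniform probability measure on the finite set `s • E ⊆ ℝ`. -/
def unifD (E : Finset ℕ) (s : ℝ) : Measure ℝ :=
  (E.card : ℝ≥0∞)⁻¹ • ∑ d ∈ E, Measure.dirac (s * (d : ℝ))

/-- The finite convolutions `μ_n = δ_{P₁⁻¹D₁} ∗ ⋯ ∗ δ_{Pₙ⁻¹Dₙ}`. -/
def muN (p : ℕ → ℕ) (D : ℕ → Finset ℕ) : ℕ → Measure ℝ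
  | 0 => Measure.dirac 0
  | n + 1 => Measure.conv (muN p D n) (unifD (D (n + 1)) ((Pprod p (n + 1) : ℝ)⁻¹))

/-- `μ` is the weak limit of the sequence of measures `ν n`. -/
def IsWeakLimit (ν : ℕ → Measure ℝ) (μ : Measure ℝ) : Prop :=
  ∀ f : BoundedContinuousFunction ℝ ℝ,
    Tendsto (fun n => ∫ x, f x ∂ν n) atTop (nhds (∫ x, f x ∂μ))

/-- `μ` is the Moran measure attached to `(p, D)`: the infinite convolution
`δ_{P₁⁻¹D₁} ∗ δ_{P₂⁻¹D₂} ∗ ⋯`, in the sense of weak convergence. -/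
def IsMoran (p : ℕ → ℕ) (D : ℕ → Finset ℕ) (μ : Measure ℝ) : Prop :=
  IsProbabilityMeasure μ ∧ IsWeakLimit (muN p D) μ

/-- The exponentials `e_λ, λ ∈ Λ` are pairwise orthogonal in `L²(μ)`. -/
def IsOrthSet (μ : Measure ℝ) (Λ : Set ℝ) : Prop :=
  ∀ l ∈ Λ, ∀ l' ∈ Λ, l ≠ l' →
    ∫ x : ℝ, Complex.exp (2 * Real.pi * Complex.I * (l - l') * x) ∂μ = 0

/-- `Λ` is a spectrum of `μ`: the exponentials `e_λ, λ ∈ Λ` form an orthonormal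
basis of `L²(μ)` (orthonormal + maximal, i.e. complete). -/
def IsSpectrum (μ : Measure ℝ) (Λ : Set ℝ) : Prop :=
  IsOrthSet μ Λ ∧
  ∀ f : ℝ → ℂ, MemLp f 2 μ →
    (∀ l ∈ Λ, ∫ x : ℝ, f x * Complex.exp (-(2 * Real.pi * Complex.I * l * x)) ∂μ = 0) →
    f =ᵐ[μ] 0

def IsSpectralMeasure (μ : Measure ℝ) : Prop := ∃ Λ : Set ℝ, Λ.Countable ∧ IsSpectrum μ Λ

/-- Condition (T1): `D n = {0,1,…,N-1}` with `3 < N`, `N ∣ p n`, `N < p n`. -/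
def T1cond (p : ℕ → ℕ) (D : ℕ → Finset ℕ) (n : ℕ) : Prop :=
  ∃ N : ℕ, 3 < N ∧ N ∣ p n ∧ N < p n ∧ D n = Finset.range N

/-- Condition (T2) (except for the global sup condition): `D n = {0,a,b}`,
`0 < a < b`, `gcd(a,b) = 1`, `{a,b} ≡ {1,2} (mod 3)`, `3 ∣ p n`. -/
def T2cond (p : ℕ → ℕ) (D : ℕ → Finset ℕ) (n : ℕ) : Prop :=
  ∃ a b : ℕ, 0 < a ∧ a < b ∧ Nat.gcd a b = 1 ∧
    (a % 3 = 1 ∧ b % 3 = 2 ∨ a % 3 = 2 ∧ b % 3 = 1) ∧ 3 ∣ p n ∧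
    D n = ({0, a, b} : Finset ℕ)

/-- Condition (T3): `D n = {0,d}` with `0 < d < p n` and `p n / gcd (d, p n)` even.
(The decomposition `d = 2^l d'` with `d'` odd always exists, with `l` the 2-adic
valuation of `d`.) -/
def T3cond (p : ℕ → ℕ) (D : ℕ → Finset ℕ) (n : ℕ) : Prop :=
  ∃ d : ℕ, 0 < d ∧ d < p n ∧ 2 ∣ p n / Nat.gcd d (p n) ∧ D n = ({0, d} : Finset ℕ)

/-- The pair `(p, D)` satisfies conditions (T1)–(T3), including the requirement
`sup {b n / p n : n of type (T2)} < 2/3`. -/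
def SatisfiesT (p : ℕ → ℕ) (D : ℕ → Finset ℕ) : Prop :=
  (∀ n, 1 ≤ n → T1cond p D n ∨ T2cond p D n ∨ T3cond p D n) ∧
  ∃ c : ℝ, c < 2 / 3 ∧ ∀ n, 1 ≤ n → T2cond p D n → (((D n).sup id : ℕ) : ℝ) / (p n : ℝ) ≤ c

/-- `σ ∈ {-1,1}^ℕ`. -/
def IsSigma (σ : ℕ → ℤ) : Prop := ∀ n, σ n = 1 ∨ σ n = -1

/-- `α` is admissible: `α m ∈ {-⌊N/2⌋, …, N - 1 - ⌊N/2⌋}` where `N = #(D m)`,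
for every `m` with `#(D m) = N_m > 3`. -/
def Admissible (D : ℕ → Finset ℕ) (α : ℕ → ℤ) : Prop :=
  ∀ m, 1 ≤ m → 3 < (D m).card →
    -(((D m).card / 2 : ℕ) : ℤ) ≤ α m ∧
      α m ≤ ((D m).card : ℤ) - 1 - (((D m).card / 2 : ℕ) : ℤ)

/-- The largest element `d n` (resp. `b n`) of `D n`. -/
def bOf (D : ℕ → Finset ℕ) (n : ℕ) : ℕ := (D n).sup id

/-- The middle element `a n` of a digit set `{0, a, b}`. -/
def aOf (D : ℕ → Finset ℕ) (n : ℕ) : ℕ := (((D n).erase 0).erase ((D n).sup id)).sup id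

/-- `l n`: the 2-adic valuation of `d n`, i.e. `d n = 2^(l n) * d'` with `d'` odd. -/
def lOf (D : ℕ → Finset ℕ) (n : ℕ) : ℕ := padicValNat 2 ((D n).sup id)

/-- The finite set `Λ_n^{σ,α}`. -/
def LamN (p : ℕ → ℕ) (D : ℕ → Finset ℕ) (σ α : ℕ → ℤ) (n : ℕ) : Set ℝ :=
  { x | ∃ c : ℕ → ℝ,
      (∀ i, (D i).card = 2 → c i = 0 ∨ c i = (σ i : ℝ) / 2 ^ (1 + lOf D i)) ∧
      (∀ i, (D i).card = 3 → c i = 0 ∨ c i = 1 / 3 ∨ c i = -(1 / 3)) ∧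
      (∀ i, 3 < (D i).card → c i = (α i : ℝ) / ((D i).card : ℝ)) ∧
      x = ∑ i ∈ Finset.Icc 1 n, (Pprod p i : ℝ) * c i }

/-- `Λ^{σ,α} = ⋃_{n ≥ 1} Λ_n^{σ,α}`. -/
def Lam (p : ℕ → ℕ) (D : ℕ → Finset ℕ) (σ α : ℕ → ℤ) : Set ℝ :=
  ⋃ n ∈ Set.Ici 1, LamN p D σ α n

/-- The Fourier transform `μ̂(ξ) = ∫ e^{-2πixξ} dμ(x)`. -/
def FT (μ : Measure ℝ) (ξ : ℝ) : ℂ :=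
  ∫ x : ℝ, Complex.exp (-(2 * Real.pi * Complex.I * x * ξ)) ∂μ

/-- The mask polynomial `m_E(t) = (1/#E) ∑_{d ∈ E} e^{2πidt}`. -/
def mask (E : Finset ℕ) (t : ℝ) : ℂ :=
  (E.card : ℂ)⁻¹ * ∑ d ∈ E, Complex.exp (2 * Real.pi * Complex.I * (d : ℝ) * t)

end

noncomputable section

theorem aux_sum_sq (N : ℕ) (c : ℝ) :
    ∑ d ∈ Finset.range N, (2 * (d : ℝ) - c) ^ 2 =
      2 * ((N : ℝ) - 1) * N * (2 * N - 1) / 3 - 2 * c * N * (N - 1) + N * c ^ 2 := by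
  induction N with
  | zero => simp
  | succ k ih =>
    rw [Finset.sum_range_succ, ih]
    push_cast
    ring

theorem aux_mask (N : ℕ) (hN : 0 < N) (t : ℝ) :
    1 - (Real.pi * (N * t)) ^ 2 / 6 ≤ ‖mask (Finset.range N) t‖ := by
  have hNr : (0 : ℝ) < N := by exact_mod_cast hN
  set S : ℂ := ∑ d ∈ Finset.range N, Complex.exp (2 * Real.pi * Complex.I * ((d : ℝ) : ℂ) * t)
    with hS
  have h1 : ‖mask (Finset.range N) t‖ = (N : ℝ)⁻¹ * ‖S‖ := by
    rw [mask, norm_mul, norm_inv, Finset.card_range, Complex.norm_natCast]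
  have h2 : ‖Complex.exp ((-(Real.pi * (N - 1) * t) : ℝ) * Complex.I) * S‖ = ‖S‖ := by
    rw [norm_mul, Complex.norm_exp_ofReal_mul_I, one_mul]
  have h3 : (Complex.exp ((-(Real.pi * (N - 1) * t) : ℝ) * Complex.I) * S).re =
      ∑ d ∈ Finset.range N, Real.cos (Real.pi * t * (2 * d - (N - 1))) := by
    rw [hS, Finset.mul_sum, Complex.re_sum]
    refine Finset.sum_congr rfl fun d _ => ?_
    rw [← Complex.exp_add, ← Complex.exp_ofReal_mul_I_re]
    congr 2
    push_cast
    ring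
  have h4 : ∑ d ∈ Finset.range N, (1 - (Real.pi * t) ^ 2 / 2 * (2 * (d : ℝ) - (N - 1)) ^ 2) ≤
      ∑ d ∈ Finset.range N, Real.cos (Real.pi * t * (2 * d - (N - 1))) := by
    refine Finset.sum_le_sum fun d _ => ?_
    have := Real.one_sub_sq_div_two_le_cos (x := Real.pi * t * (2 * d - (N - 1)))
    calc _ = 1 - (Real.pi * t * (2 * d - (N - 1))) ^ 2 / 2 := by ring
      _ ≤ _ := this
  rw [Finset.sum_sub_distrib, ← Finset.mul_sum, aux_sum_sq] at h4
  simp only [Finset.sum_const, Finset.card_range, nsmul_eq_mul, mul_one] at h4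
  have h5 := Complex.re_le_norm (Complex.exp ((-(Real.pi * (N - 1) * t) : ℝ) * Complex.I) * S)
  rw [h2, h3] at h5
  rw [h1, inv_mul_eq_div, le_div_iff₀ hNr]
  refine le_trans ?_ (h4.trans h5)
  have : 0 ≤ (Real.pi * t) ^ 2 * N := by positivity
  nlinarith

theorem aux_coef (p : ℕ → ℕ) (D : ℕ → Finset ℕ) (hT : SatisfiesT p D)
    (σ α : ℕ → ℤ) (hσ : IsSigma σ) (hα : Admissible D α) (c : ℕ → ℝ)
    (h2 : ∀ i, (D i).card = 2 → c i = 0 ∨ c i = (σ i : ℝ) / 2 ^ (1 + lOf D i))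
    (h3 : ∀ i, (D i).card = 3 → c i = 0 ∨ c i = 1 / 3 ∨ c i = -(1 / 3))
    (h4 : ∀ i, 3 < (D i).card → c i = (α i : ℝ) / ((D i).card : ℝ))
    (i : ℕ) (hi : 1 ≤ i) : |c i| ≤ 1 / 2 := by
  rcases hT.1 i hi with ⟨N, hN, -, -, hD⟩ | ⟨a, b, ha, hab, -, -, -, hD⟩ | ⟨d, hd, -, -, hD⟩
  · have hc : 3 < (D i).card := by simpa [hD] using hN
    rw [h4 i hc]
    obtain ⟨ha, hb⟩ := hα i hi hc
    have hpos : (0 : ℝ) < (D i).card := by exact_mod_cast (by omega : 0 < (D i).card)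
    have e1 : -((D i).card : ℤ) ≤ 2 * α i := by omega
    have e2 : 2 * α i ≤ ((D i).card : ℤ) := by omega
    have e1' : -((D i).card : ℝ) ≤ 2 * α i := by exact_mod_cast e1
    have e2' : 2 * (α i : ℝ) ≤ ((D i).card : ℝ) := by exact_mod_cast e2
    rw [abs_le, le_div_iff₀ hpos, div_le_iff₀ hpos]
    constructor <;> linarith
  · have hc : (D i).card = 3 := by
      rw [hD, Finset.card_eq_three]
      exact ⟨0, a, b, by omega, by omega, by omega, rfl⟩
    rcases h3 i hc with h | h | h <;> rw [h, abs_le] <;> constructor <;> norm_num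
  · have hc : (D i).card = 2 := by
      rw [hD, Finset.card_eq_two]
      exact ⟨0, d, by omega, rfl⟩
    rcases h2 i hc with h | h
    · rw [h]; norm_num
    · have hs : |(σ i : ℝ)| = 1 := by rcases hσ i with h | h <;> rw [h] <;> norm_num
      rw [h, abs_div, hs, abs_of_pos (by positivity : (0 : ℝ) < 2 ^ (1 + lOf D i))]
      apply one_div_le_one_div_of_le (by norm_num)
      calc (2 : ℝ) = 2 ^ 1 := by norm_num
        _ ≤ _ := pow_le_pow_right₀ (by norm_num) (by omega)

theorem aux_Pprod_succ (p : ℕ → ℕ) (n : ℕ) : Pprod p (n + 1) = Pprod p n * p (n + 1) := by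
  unfold Pprod
  rw [Finset.prod_Icc_succ_top (by omega)]

theorem aux_Pprod_pos (p : ℕ → ℕ) (hp : ∀ n, 1 ≤ n → 1 < p n) (n : ℕ) : 0 < Pprod p n := by
  unfold Pprod
  exact Finset.prod_pos fun i hi => by
    have := hp i (Finset.mem_Icc.1 hi).1
    omega

theorem aux_sum (p : ℕ → ℕ) (hp : ∀ n, 1 ≤ n → 1 < p n) (c : ℕ → ℝ)
    (hc : ∀ i, 1 ≤ i → |c i| ≤ 1 / 2) (n : ℕ) :
    |∑ i ∈ Finset.Icc 1 n, (Pprod p i : ℝ) * c i| ≤ (Pprod p n : ℝ) - 1 := by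
  induction n with
  | zero => simp [Pprod]
  | succ n ih =>
    rw [Finset.sum_Icc_succ_top (by omega)]
    have hP : (0 : ℝ) < Pprod p n := by exact_mod_cast aux_Pprod_pos p hp n
    have h2 : (2 : ℝ) ≤ p (n + 1) := by exact_mod_cast hp (n + 1) (by omega)
    have hPs : (Pprod p (n + 1) : ℝ) = Pprod p n * p (n + 1) := by
      rw [aux_Pprod_succ]; push_cast; rfl
    have hge : 2 * (Pprod p n : ℝ) ≤ Pprod p (n + 1) := by rw [hPs]; nlinarith
    have h3 : |(Pprod p (n + 1) : ℝ) * c (n + 1)| ≤ Pprod p (n + 1) * (1 / 2) := by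
      rw [abs_mul, Nat.abs_cast]
      exact mul_le_mul_of_nonneg_left (hc _ (by omega)) (by positivity)
    have := abs_add_le (∑ i ∈ Finset.Icc 1 n, (Pprod p i : ℝ) * c i)
      ((Pprod p (n + 1) : ℝ) * c (n + 1))
    linarith


/-- Lemma 4.6. If `D (n_k + 1)` is of type (T1), then
`|m_{D_{n_k+1}}((ξ+λ)/P_{n_k+1})| ≥ 1 - (1/6)(3π/4)² > 0` for all `k`, all `|ξ| < 1`
and all `λ ∈ Λ_{n_k}^{σ,α}`. -/
theorem consecutive_digit_mask_lower_bound (p : ℕ → ℕ) (D : ℕ → Finset ℕ)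
    (hp : ∀ n, 1 ≤ n → 1 < p n) (hT : SatisfiesT p D)
    (n : ℕ → ℕ) (hmono : StrictMono n) (hT1 : ∀ k, T1cond p D (n k + 1)) :
    (0 : ℝ) < 1 - (1 / 6) * (3 * Real.pi / 4) ^ 2 ∧
    ∀ k, ∀ ξ : ℝ, |ξ| < 1 →
      ∀ σ α : ℕ → ℤ, IsSigma σ → Admissible D α → ∀ l ∈ LamN p D σ α (n k),
        1 - (1 / 6) * (3 * Real.pi / 4) ^ 2 ≤
          ‖mask (D (n k + 1)) ((ξ + l) / (Pprod p (n k + 1) : ℝ))‖ := by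
  constructor
  · have h1 := Real.pi_lt_d2
    have h0 := Real.pi_pos
    nlinarith
  · rintro k ξ hξ σ α hσ hα l ⟨c, h2, h3, h4, rfl⟩
    have hc := aux_coef p D hT σ α hσ hα c h2 h3 h4
    have hs := aux_sum p hp c hc (n k)
    set l := ∑ i ∈ Finset.Icc 1 (n k), (Pprod p i : ℝ) * c i
    obtain ⟨N, hN, ⟨q, hq⟩, hlt, hD⟩ := hT1 k
    rw [hD]
    refine le_trans ?_ (aux_mask N (by omega) _)
    have hP : (0 : ℝ) < Pprod p (n k) := by exact_mod_cast aux_Pprod_pos p hp (n k)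
    have hq2 : 2 ≤ q := by
      by_contra hcon
      have : q ≤ 1 := by omega
      have := Nat.mul_le_mul_left N this
      omega
    have hqr : (2 : ℝ) ≤ q := by exact_mod_cast hq2
    have hNr : (0 : ℝ) < N := by exact_mod_cast (by omega : 0 < N)
    have hPs : (Pprod p (n k + 1) : ℝ) = Pprod p (n k) * (N * q) := by
      rw [aux_Pprod_succ, hq]; push_cast; rfl
    have hx : |ξ + l| ≤ Pprod p (n k) := by
      have := abs_add_le ξ l
      linarith
    have hb : |(N : ℝ) * ((ξ + l) / (Pprod p (n k + 1) : ℝ))| ≤ 1 / 2 := by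
      have he : (N : ℝ) * ((ξ + l) / (Pprod p (n k + 1) : ℝ)) = (ξ + l) / (Pprod p (n k) * q) := by
        rw [hPs]; field_simp
      have hpos : (0 : ℝ) < Pprod p (n k) * q := by positivity
      rw [he, abs_div, abs_of_pos hpos, div_le_iff₀ hpos]
      nlinarith
    have hsq : ((N : ℝ) * ((ξ + l) / (Pprod p (n k + 1) : ℝ))) ^ 2 ≤ (1 / 2) ^ 2 := by
      rw [← sq_abs]
      exact pow_le_pow_left₀ (abs_nonneg _) hb 2
    rw [mul_pow]
    have hpi : 0 ≤ Real.pi ^ 2 := by positivity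
    nlinarith [mul_le_mul_of_nonneg_left hsq hpi]

end
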